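/- Let Q be a finite group such that every nontrivial normal subgroup of Q has nontrivial intersection with the commutator subgroup [Q,Q], and suppose there is no injective group homomorphism from Q into the orthogonal group O(4). Then there is no injective group homomorphism from the direct product Q × A_6 into the orthogonal group O(9), where A_6 is the alternating group on 6 letters. -/

import Mathlib

/-!
Write `V = ℝ⁹` for the representation given by a hypothetical embedding of `Q × A₆` into `O(9)`,
and let `P` be the average of `A₆` on `V`, i.e. the orthogonal projection onto the fixed space
`W = V^{A₆}`; it commutes with `Q`.

The key fact (`trivial_of_finrank_le`) is that `A₆` acts trivially on every representation of
dimension `n ≤ 4` in characteristic zero. It is proved by counting. For a subgroup `H` the number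
`dim Y^H = |H|⁻¹ ∑_{h ∈ H} χ(h)` is a natural number at most `n`. The subgroups `C₂`, two kinds of
`C₃`, `C₃ × C₃`, two kinds of `S₃` and two kinds of `A₄` only involve the character values `n`, `a`,
`b`, `c` at `1`, `(0 1 2)`, `(0 1 2)(3 4 5)` and `(0 1)(3 4)`. Eliminating `a`, `b`, `c` leaves linear
equations between the eight dimensions, and for `n ≤ 4` they force `C₂` or a `C₃` to act trivially;
simplicity of `A₆` does the rest.

Consequently a nonzero `A₆`-invariant subspace of `ker P` has dimension at least `5`, both for `V`
and for its complexification. Two consequences are drawn.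

* Since `A₆` acts nontrivially, `ker P ≠ 0`, so `dim W ≤ 9 - 5 = 4` (`finrank_range_avg_le`), and
  restriction to `W` gives `φ : Q → O(4)` (`exists_orthogonal_hom`).
* An operator on `V ⊗ ℂ` commuting with `A₆` is a scalar on the complexified kernel
  (`exists_scalar`): for an eigenvalue `c` of `T`, the kernel and the image of `T - c` there are
  invariant and cannot both be nonzero because `5 + 5 > 9`. Hence `[Q, Q]` acts trivially on the
  kernel (`commutator_apply_ker_avg`).

An element of `ker φ ∩ [Q, Q]` thus fixes both `W` and `ker P`, so it is trivial. By the
assumption on normal subgroups `ker φ` is trivial, i.e. `Q` embeds into `O(4)`.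
-/

namespace A6Rep

/-! ### Subgroups of `A₆` listed by conjugates -/


/-- The alternating group on the six letters `0, …, 5`. -/
abbrev A6 := alternatingGroup (Fin 6)

/-- The even permutation `(i j)(k l)`, the right factor acting first. It is written with
`Equiv.trans` instead of `*`, which the kernel evaluates much faster. -/
def dt (i j k l : Fin 6) (h : i ≠ j := by decide) (hkl : k ≠ l := by decide) : A6 :=
  ⟨(Equiv.swap k l).trans (Equiv.swap i j), by
    simp [Equiv.Perm.mem_alternatingGroup, Equiv.Perm.sign_trans, Equiv.Perm.sign_swap h,
      Equiv.Perm.sign_swap hkl]⟩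

/-- The product `g * h`, written with `Equiv.trans`. -/
def comp (g h : A6) : A6 :=
  ⟨h.1.trans g.1, (alternatingGroup (Fin 6)).mul_mem g.2 h.2⟩

/-- The identity, written as `(0 1)(0 1)`. -/
def e : A6 := dt 0 1 0 1

theorem e_eq_one : e = 1 := Subtype.ext (by ext i; simp [e, dt])

/-- The 3-cycle `(0 1 2)`. -/
def x3 : A6 := dt 0 1 1 2

/-- The element `(0 1 2)(3 4 5)`. -/
def x33 : A6 := comp (dt 0 1 1 2) (dt 3 4 4 5)

/-- The involution `(0 1)(3 4)`. -/
def y2 : A6 := dt 0 1 3 4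

/-- The conjugates of `c` by the elements of `L`. -/
def conjs (c : A6) (L : List A6) : List A6 := L.map fun g => g * c * g⁻¹

/-- The list consisting of the identity, the conjugates of `(0 1 2)` by `L₁`, those of
`(0 1 2)(3 4 5)` by `L₂` and those of `(0 1)(3 4)` by `L₃`. All subgroups in the counting argument are
given in this form, from which the sum of a character over the subgroup can be read off. -/
def elts (L₁ L₂ L₃ : List A6) : List A6 :=
  1 :: (conjs x3 L₁ ++ (conjs x33 L₂ ++ conjs y2 L₃))

/-- Left multiplication by each entry permutes the list. For a list without repetitions that
contains `1`, this says that its entries form a subgroup. -/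
def MulClosed (l : List A6) : Prop := ∀ h ∈ l, (l.map (h * ·)).Perm l

/-- The permutations underlying `conjs c L`, written with `Equiv.trans`. -/
def conjsPerm (c : A6) (L : List A6) : List (Equiv.Perm (Fin 6)) :=
  L.map fun g => (g.1.symm.trans c.1).trans g.1

/-- The permutations underlying `elts L₁ L₂ L₃`, written with `Equiv.trans`. -/
def eltsPerm (L₁ L₂ L₃ : List A6) : List (Equiv.Perm (Fin 6)) :=
  Equiv.refl _ :: (conjsPerm x3 L₁ ++ (conjsPerm x33 L₂ ++ conjsPerm y2 L₃))

theorem map_val_elts (L₁ L₂ L₃ : List A6) :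
    (elts L₁ L₂ L₃).map Subtype.val = eltsPerm L₁ L₂ L₃ := by
  have h (c : A6) (L : List A6) : (conjs c L).map Subtype.val = conjsPerm c L := by
    simp only [conjs, conjsPerm, List.map_map]
    rfl
  simp only [elts, eltsPerm, List.map_cons, List.map_append, h]
  rfl

/-- Boolean test for `MulClosed` on lists of permutations. -/
def mulClosedCheck (l : List (Equiv.Perm (Fin 6))) : Bool :=
  l.all fun g => (l.map fun g' => g'.trans g).isPerm l

theorem mulClosed_elts (L₁ L₂ L₃ : List A6)
    (h : mulClosedCheck (eltsPerm L₁ L₂ L₃) = true) :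
    MulClosed (elts L₁ L₂ L₃) := by
  rw [← map_val_elts, mulClosedCheck, List.all_eq_true] at h
  intro g hg
  have := List.isPerm_iff.1 (h g.1 (List.mem_map_of_mem hg))
  rw [List.map_map] at this
  rw [← List.map_perm_map_iff Subtype.val_injective, List.map_map]
  exact this

/-- The subgroup generated by `(0 1)(3 4)`. -/
theorem closed_C2 : MulClosed (elts [] [] [e]) :=
  mulClosed_elts _ _ _ (by decide +kernel)

/-- The subgroup generated by `(0 1 2)`. -/
theorem closed_C3 : MulClosed (elts [e, dt 0 1 3 4] [] []) :=
  mulClosed_elts _ _ _ (by decide +kernel)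

/-- The subgroup generated by `(0 1 2)(3 4 5)`. -/
theorem closed_C3' : MulClosed (elts [] [e, dt 0 1 3 4] []) :=
  mulClosed_elts _ _ _ (by decide +kernel)

/-- The Sylow 3-subgroup generated by `(0 1 2)` and `(3 4 5)`. -/
theorem closed_E9 : MulClosed (elts
    [comp (dt 0 1 0 3) (dt 1 4 2 5), comp (dt 0 1 0 3) (dt 1 5 2 4), e, dt 0 1 3 4]
    [e, comp (dt 0 1 0 3) (dt 1 5 2 4), comp (dt 0 1 0 3) (dt 1 4 2 5), dt 0 1 3 4] []) :=
  mulClosed_elts _ _ _ (by decide +kernel)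

/-- The copy of `S₃` generated by `(0 1 2)` and `(0 1)(3 4)`. -/
theorem closed_S3 : MulClosed (elts [e, dt 0 1 3 4] [] [dt 0 1 1 2, e, dt 0 1 0 2]) :=
  mulClosed_elts _ _ _ (by decide +kernel)

/-- The copy of `S₃` generated by `(0 1 2)(3 4 5)` and `(0 1)(3 4)`. -/
theorem closed_S3' : MulClosed (elts [] [e, dt 0 1 3 4] [dt 0 2 3 5, e, dt 1 2 4 5]) :=
  mulClosed_elts _ _ _ (by decide +kernel)

/-- The copy of `A₄` that fixes `4` and `5`. -/
theorem closed_A4 : MulClosed (elts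
    [dt 0 3 3 4, dt 0 1 1 3, e, dt 2 3 3 4, dt 0 1 3 4, dt 0 1 0 3, dt 0 1 2 3, dt 1 3 3 4] []
    [dt 0 1 2 4, dt 0 3 2 4, dt 0 2 2 4]) :=
  mulClosed_elts _ _ _ (by decide +kernel)

/-- A copy of `A₄` acting transitively on the six letters; its elements of order 3 are conjugate to
`(0 1 2)(3 4 5)`. -/
theorem closed_A4' : MulClosed (elts []
    [e, dt 0 5 1 3, dt 0 1 3 4, dt 0 4 2 5, dt 1 3 2 4, dt 0 5 2 4, dt 0 3 1 5, dt 1 4 2 3]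
    [dt 0 2 0 3, dt 1 5 2 3, dt 0 3 4 5]) :=
  mulClosed_elts _ _ _ (by decide +kernel)

/-! ### Representations of `A₆` of dimension at most four -/

section
variable {k Y : Type*} [Field k] [AddCommGroup Y] [Module k Y]

theorem trace_conjs (ρ : A6 →* Module.End k Y) (c : A6) (L : List A6) :
    LinearMap.trace k Y ((conjs c L).map ρ).sum = L.length * LinearMap.trace k Y (ρ c) := by
  induction L with
  | nil => simp [conjs]
  | cons g L ih =>
    have h : LinearMap.trace k Y (ρ (g * c * g⁻¹)) = LinearMap.trace k Y (ρ c) := by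
      rw [map_mul, LinearMap.trace_mul_comm, ← map_mul]
      congr 2
      group
    simp only [conjs, List.map_cons, List.sum_cons, map_add, List.length_cons] at ih ⊢
    rw [ih, h]
    push_cast
    ring

/-- For a subgroup `H` listed by `elts`, there is a number `f` (the dimension of the `H`-fixed
vectors) with `|H| * f = ∑_{h ∈ H} χ(h)`; it is at most the dimension of the representation, with
equality only if `H` acts trivially. -/
theorem exists_fixed_dim [CharZero k] [FiniteDimensional k Y] (ρ : A6 →* Module.End k Y)
    (L₁ L₂ L₃ : List A6)
    (hl : MulClosed (elts L₁ L₂ L₃)) :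
    ∃ f : ℕ, f ≤ Module.finrank k Y ∧
      (((1 + (L₁.length + (L₂.length + L₃.length)) : ℕ) : k)) * f =
        Module.finrank k Y + (L₁.length * LinearMap.trace k Y (ρ x3) +
          (L₂.length * LinearMap.trace k Y (ρ x33) + L₃.length * LinearMap.trace k Y (ρ y2))) ∧
      (f = Module.finrank k Y → ∀ h ∈ elts L₁ L₂ L₃, ρ h = 1) := by
  set l := elts L₁ L₂ L₃ with hldef
  set N : Module.End k Y := (l.map ρ).sum with hN
  have hlen : l.length = 1 + (L₁.length + (L₂.length + L₃.length)) := by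
    simp [hldef, elts, conjs]; ring
  have hm0 : ((l.length : ℕ) : k) ≠ 0 := by
    rw [hlen]; exact_mod_cast (by omega : 1 + (L₁.length + (L₂.length + L₃.length)) ≠ 0)
  rw [← hlen]
  set m : k := (l.length : k) with hm
  have habs : ∀ h ∈ l, ρ h * N = N := by
    intro h hh
    have := ((hl h hh).map ρ).sum_eq
    rw [List.map_map] at this
    rw [hN, ← List.sum_map_mul_left]
    simpa [Function.comp_def] using this
  have hNN : N * N = m • N := by
    have key : ∀ l' : List A6, (∀ h ∈ l', ρ h * N = N) →
        (l'.map ρ).sum * N = (l'.length : k) • N := by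
      intro l' hl'
      induction l' with
      | nil => simp
      | cons a t ih =>
        simp only [List.map_cons, List.sum_cons, add_mul, List.length_cons]
        rw [hl' a (by simp), ih (fun h hh => hl' h (by simp [hh]))]
        push_cast
        rw [add_smul, one_smul, add_comm]
    exact key l habs
  -- `p` is the projection onto the fixed vectors, so its trace is its rank.
  set p : Module.End k Y := m⁻¹ • N with hp
  have hpp : IsIdempotentElem p := by
    rw [IsIdempotentElem, hp, smul_mul_smul_comm, hNN, smul_smul]
    congr 1
    field_simp
  have htr := (LinearMap.IsIdempotentElem.isProj_range _ hpp).trace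
  refine ⟨Module.finrank k (LinearMap.range p), Submodule.finrank_le _, ?_, ?_⟩
  · rw [← htr, hp, map_smul, smul_eq_mul, mul_inv_cancel_left₀ hm0, hN, hldef, elts]
    simp only [List.map_cons, List.map_append, List.sum_cons, List.sum_append, map_add,
      trace_conjs, map_one, LinearMap.trace_one]
  · intro hf h hh
    have htop : LinearMap.range p = ⊤ := Submodule.eq_top_of_finrank_eq hf
    have h1 : p = 1 := by
      ext v
      have : v ∈ LinearMap.range p := htop ▸ Submodule.mem_top
      exact (LinearMap.IsIdempotentElem.mem_range_iff hpp).1 this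
    have h2 : ρ h * p = p := by rw [hp, mul_smul_comm, habs h hh]
    simpa [h1] using h2

/-- A homomorphism from the simple group `A₆` that kills a nontrivial element is trivial. -/
theorem eq_one_of_ne_one {M : Type*} [Monoid M] (ρ : A6 →* M) {x : A6} (hx : x ≠ 1)
    (h : ρ x = 1) (g : A6) : ρ g = 1 := by
  have : IsSimpleGroup A6 := alternatingGroup.isSimpleGroup (by simp)
  rcases (MonoidHom.normal_ker ρ).eq_bot_or_eq_top with hk | hk
  · exact absurd ((Subgroup.mem_bot).1 (hk ▸ (MonoidHom.mem_ker.2 h))) hx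
  · exact MonoidHom.mem_ker.1 (hk ▸ Subgroup.mem_top g)

/-- The numerical part of `trivial_of_finrank_le`: `f₂`, `s`, `t`, `r`, `u`, `u'`, `v`, `v'` are the
dimensions of the vectors fixed by `C₂`, the two `C₃`, `C₃ × C₃`, the two `S₃` and the two `A₄`. -/
theorem eq_or_eq_of_fixed_dims {n f₂ s t r u u' v v' : ℕ} (hn : n ≤ 4) (hf₂ : f₂ ≤ n) (hs : s ≤ n)
    (ht : t ≤ n) (hr : r ≤ n) (E1 : n + 3 * r = 2 * s + 2 * t) (E2 : 2 * u + n = s + 2 * f₂)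
    (E3 : 2 * u' + n = t + 2 * f₂) (E4 : 2 * v + n = 2 * s + f₂)
    (E5 : 2 * v' + n = 2 * t + f₂) : s = n ∨ f₂ = n := by
  interval_cases n <;> interval_cases s <;> omega

/-- Every representation of `A₆` of dimension at most four in characteristic zero is trivial. -/
theorem trivial_of_finrank_le [CharZero k] [FiniteDimensional k Y] (ρ : A6 →* Module.End k Y)
    (hn : Module.finrank k Y ≤ 4) (g : A6) : ρ g = 1 := by
  obtain ⟨f₂, hf₂, e₂, t₂⟩ := exists_fixed_dim ρ _ _ _ closed_C2
  obtain ⟨s, hs, es, ts⟩ := exists_fixed_dim ρ _ _ _ closed_C3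
  obtain ⟨t, ht, et, -⟩ := exists_fixed_dim ρ _ _ _ closed_C3'
  obtain ⟨r, hr, er, -⟩ := exists_fixed_dim ρ _ _ _ closed_E9
  obtain ⟨u, hu, eu, -⟩ := exists_fixed_dim ρ _ _ _ closed_S3
  obtain ⟨u', hu', eu', -⟩ := exists_fixed_dim ρ _ _ _ closed_S3'
  obtain ⟨v, hv, ev, -⟩ := exists_fixed_dim ρ _ _ _ closed_A4
  obtain ⟨v', hv', ev', -⟩ := exists_fixed_dim ρ _ _ _ closed_A4'
  have hx : ρ x3 = 1 ∨ ρ y2 = 1 := by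
    replace ts := fun h => ts h x3 (by simp [elts, conjs, e_eq_one])
    replace t₂ := fun h => t₂ h y2 (by simp [elts, conjs, e_eq_one])
    -- The character values `a`, `b`, `c` are eliminated from the eight equations.
    generalize Module.finrank k Y = n at *
    generalize LinearMap.trace k Y (ρ x3) = a at *
    generalize LinearMap.trace k Y (ρ x33) = b at *
    generalize LinearMap.trace k Y (ρ y2) = c at *
    simp only [List.length_cons, List.length_nil] at e₂ es et er eu eu' ev ev'
    push_cast at e₂ es et er eu eu' ev ev'
    have E1 : n + 3 * r = 2 * s + 2 * t := by
      have : (n : k) + 3 * r = 2 * s + 2 * t := by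
        linear_combination er / 3 - 2 * es / 3 - 2 * et / 3
      exact_mod_cast this
    have E2 : 2 * u + n = s + 2 * f₂ := by
      have : (2 * u + n : k) = s + 2 * f₂ := by linear_combination eu / 3 - es / 3 - e₂
      exact_mod_cast this
    have E3 : 2 * u' + n = t + 2 * f₂ := by
      have : (2 * u' + n : k) = t + 2 * f₂ := by linear_combination eu' / 3 - et / 3 - e₂
      exact_mod_cast this
    have E4 : 2 * v + n = 2 * s + f₂ := by
      have : (2 * v + n : k) = 2 * s + f₂ := by
        linear_combination ev / 6 - 2 * es / 3 - e₂ / 2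
      exact_mod_cast this
    have E5 : 2 * v' + n = 2 * t + f₂ := by
      have : (2 * v' + n : k) = 2 * t + f₂ := by
        linear_combination ev' / 6 - 2 * et / 3 - e₂ / 2
      exact_mod_cast this
    have hcase : s = n ∨ f₂ = n := eq_or_eq_of_fixed_dims hn hf₂ hs ht hr E1 E2 E3 E4 E5
    exact hcase.imp ts t₂
  rcases hx with h | h
  · exact eq_one_of_ne_one ρ (fun h' => (by decide : x3.1 ≠ Equiv.refl _) (congrArg _ h')) h g
  · exact eq_one_of_ne_one ρ (fun h' => (by decide : y2.1 ≠ Equiv.refl _) (congrArg _ h')) h g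
end

/-! ### Averaging over a finite group -/

section
variable {k V : Type*} [Field k] [AddCommGroup V] [Module k V]

/-- The average of a homomorphism `ρ` from a finite group into a `k`-algebra. For a representation
it is the projection onto the fixed vectors. -/
noncomputable def avg (k : Type*) {G R : Type*} [Field k] [Group G] [Fintype G] [Ring R]
    [Algebra k R] (ρ : G →* R) : R :=
  (Fintype.card G : k)⁻¹ • ∑ g, ρ g

section avg
variable {G R : Type*} [Group G] [Fintype G] [Ring R] [Algebra k R]

theorem mul_avg (ρ : G →* R) (g : G) : ρ g * avg k ρ = avg k ρ := by
  rw [avg, mul_smul_comm, Finset.mul_sum]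
  congr 1
  exact Fintype.sum_equiv (Equiv.mulLeft g) _ _ fun h => by simp

theorem avg_mul (ρ : G →* R) (g : G) : avg k ρ * ρ g = avg k ρ := by
  rw [avg, smul_mul_assoc, Finset.sum_mul]
  congr 1
  exact Fintype.sum_equiv (Equiv.mulRight g) _ _ fun h => by simp

theorem avg_mul_avg [CharZero k] (ρ : G →* R) : avg k ρ * avg k ρ = avg k ρ := by
  have h0 : (Fintype.card G : k) ≠ 0 := Nat.cast_ne_zero.2 Fintype.card_ne_zero
  have h : (∑ g, ρ g) * avg k ρ = ∑ _g : G, avg k ρ := by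
    rw [Finset.sum_mul]
    exact Finset.sum_congr rfl fun g _ => mul_avg ρ g
  conv_lhs => rw [avg, smul_mul_assoc]
  rw [← avg, h, Finset.sum_const, Finset.card_univ, ← Nat.cast_smul_eq_nsmul k, smul_smul,
    inv_mul_cancel₀ h0, one_smul]

theorem commute_avg (ρ : G →* R) {T : R} (hT : ∀ g, Commute T (ρ g)) : Commute T (avg k ρ) :=
  (Commute.sum_right _ _ _ fun g _ => hT g).smul_right _

theorem avg_apply_of_fixed [CharZero k] (ρ : G →* Module.End k V) {v : V} (hv : ∀ g, ρ g v = v) :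
    avg k ρ v = v := by
  have h0 : (Fintype.card G : k) ≠ 0 := Nat.cast_ne_zero.2 Fintype.card_ne_zero
  simp only [avg, LinearMap.smul_apply, LinearMap.sum_apply, hv, Finset.sum_const,
    Finset.card_univ]
  rw [← Nat.cast_smul_eq_nsmul k, smul_smul, inv_mul_cancel₀ h0, one_smul]

/-- Ring homomorphisms that are semilinear over a map of scalar fields preserve averages. -/
theorem map_avg {R' : Type*} [Ring R'] (k' : Type*) [Field k'] [Algebra k' R']
    (f : R →+* R') (i : k →+* k') (hf : ∀ (c : k) (r : R), f (c • r) = i c • f r) (ρ : G →* R) :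
    f (avg k ρ) = avg k' ((f : R →* R').comp ρ) := by
  simp [avg, hf]

theorem transpose_avg {n : Type*} [Fintype n] [DecidableEq n] (σ : G →* Matrix n n ℝ)
    (hσ : ∀ g, (σ g).transpose = σ g⁻¹) : (avg ℝ σ).transpose = avg ℝ σ := by
  rw [avg, Matrix.transpose_smul, Matrix.transpose_sum]
  congr 1
  exact Fintype.sum_equiv (Equiv.inv G) _ _ fun g => hσ g

end avg

-- Otherwise unification may try to evaluate the sum over the 360 elements of `A₆`.
attribute [irreducible] avg

/-! ### The commutant of `A₆` outside the fixed vectors -/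

theorem apply_mem_ker_avg (ρ : A6 →* Module.End k V) (g : A6) {v : V}
    (hv : v ∈ LinearMap.ker (avg k ρ)) : ρ g v ∈ LinearMap.ker (avg k ρ) := by
  rw [LinearMap.mem_ker] at hv ⊢
  rw [← Module.End.mul_apply, avg_mul, hv]

/-- An invariant subspace of dimension at most four consists of fixed vectors, so it is zero if it
lies in the kernel of the averaging projection. -/
theorem eq_bot_of_finrank_le [CharZero k] [FiniteDimensional k V] (ρ : A6 →* Module.End k V)
    (Y : Submodule k V)
    (hY : Y ≤ LinearMap.ker (avg k ρ)) (hinv : ∀ g, ∀ y ∈ Y, ρ g y ∈ Y)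
    (hdim : Module.finrank k Y ≤ 4) : Y = ⊥ := by
  let ρ' : A6 →* Module.End k Y :=
    { toFun := fun g => (ρ g).restrict (hinv g)
      map_one' := by ext; simp
      map_mul' := fun g h => by ext; simp }
  rw [eq_bot_iff]
  intro y hy
  have hfix : ∀ g, ρ g y = y := fun g => by
    have := trivial_of_finrank_le ρ' hdim g
    simpa [ρ'] using congrArg Subtype.val (LinearMap.congr_fun this ⟨y, hy⟩)
  rw [Submodule.mem_bot, ← avg_apply_of_fixed ρ hfix]
  exact hY hy

/-- In dimension at most nine, operators commuting with `A₆` are scalar on the kernel of the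
averaging projection. -/
theorem exists_scalar [CharZero k] [FiniteDimensional k V] [IsAlgClosed k]
    (ρ : A6 →* Module.End k V) (hV : Module.finrank k V ≤ 9) {T : Module.End k V} (hT : ∀ g, Commute T (ρ g)) :
    ∃ c : k, ∀ v ∈ LinearMap.ker (avg k ρ), T v = c • v := by
  set U := LinearMap.ker (avg k ρ) with hU
  have hker : ∀ S : Module.End k V, (∀ g, Commute S (ρ g)) → ∀ v ∈ U, S v ∈ U := by
    intro S hS v hv
    have := LinearMap.congr_fun (commute_avg (k := k) ρ hS).eq v
    rw [hU, LinearMap.mem_ker] at hv ⊢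
    simpa [hv] using this.symm
  have hρU : ∀ g, ∀ v ∈ U, ρ g v ∈ U := fun g v hv => apply_mem_ker_avg ρ g hv
  by_cases hbot : U = ⊥
  · exact ⟨0, fun v hv => by rw [hbot, Submodule.mem_bot] at hv; simp [hv]⟩
  have : Nontrivial U := Submodule.nontrivial_iff_ne_bot.2 hbot
  obtain ⟨c, hc⟩ := Module.End.exists_eigenvalue (T.restrict (hker T hT))
  obtain ⟨w, hw⟩ := hc.exists_hasEigenvector
  refine ⟨c, ?_⟩
  set S : Module.End k V := T - c • 1 with hS
  have hSc : ∀ g, Commute S (ρ g) := fun g =>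
    (hT g).sub_left ((Commute.one_left _).smul_left _)
  have hSρ : ∀ g v, S (ρ g v) = ρ g (S v) := fun g v => LinearMap.congr_fun (hSc g).eq v
  -- Kernel and image of `S` on `U` are invariant. The kernel is nonzero, hence of dimension at
  -- least `5`, so the image has dimension at most `9 - 5 = 4` and vanishes.
  have hrn := LinearMap.finrank_range_add_finrank_ker (S.domRestrict U)
  have h1 : 5 ≤ Module.finrank k (LinearMap.ker (S.domRestrict U)) := by
    by_contra hlt
    have h2 := eq_bot_of_finrank_le ρ ((LinearMap.ker (S.domRestrict U)).map U.subtype)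
      (Submodule.map_subtype_le _ _) (by
        rintro g _ ⟨y, hy, rfl⟩
        refine ⟨⟨ρ g y, hρU g y y.2⟩, ?_, rfl⟩
        have hy' : S y = 0 := hy
        change S (ρ g y) = 0
        rw [hSρ, hy', map_zero])
      (by rw [Submodule.finrank_map_subtype_eq]; omega)
    have h3 : (w : V) ∈ (LinearMap.ker (S.domRestrict U)).map U.subtype := by
      refine ⟨w, ?_, rfl⟩
      have := congrArg Subtype.val hw.apply_eq_smul
      simp only [LinearMap.coe_restrict_apply, Submodule.coe_smul] at this
      change S w = 0
      simp [hS, this]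
    rw [h2, Submodule.mem_bot] at h3
    exact hw.2 (Subtype.ext h3)
  have hUle : Module.finrank k U ≤ Module.finrank k V := Submodule.finrank_le _
  have h4 : LinearMap.range (S.domRestrict U) = ⊥ := by
    apply eq_bot_of_finrank_le ρ
    · rintro _ ⟨y, rfl⟩
      exact hker S hSc y y.2
    · rintro g _ ⟨y, rfl⟩
      exact ⟨⟨ρ g y, hρU g y y.2⟩, hSρ g y⟩
    · omega
  intro v hv
  have h5 : S v ∈ LinearMap.range (S.domRestrict U) := ⟨⟨v, hv⟩, rfl⟩
  rw [h4, Submodule.mem_bot] at h5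
  simpa [hS, sub_eq_zero] using h5

theorem commutator_apply_ker_avg [CharZero k] [FiniteDimensional k V] [IsAlgClosed k]
    (ρ : A6 →* Module.End k V) (hV : Module.finrank k V ≤ 9) {Q : Type*} [Group Q] (τ : Q →* Module.End k V)
    (hτ : ∀ q g, Commute (τ q) (ρ g)) {q : Q} (hq : q ∈ commutator Q) {v : V}
    (hv : v ∈ LinearMap.ker (avg k ρ)) : τ q v = v := by
  choose c hc using fun q => exists_scalar ρ hV (hτ q)
  let S : Subgroup Q :=
    { carrier := {q | ∀ v ∈ LinearMap.ker (avg k ρ), τ q v = v}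
      one_mem' := by simp
      mul_mem' := fun {a b} ha hb v hv => by
        rw [map_mul, Module.End.mul_apply, hb v hv, ha v hv]
      inv_mem' := fun {a} ha v hv => by
        conv_lhs => rw [← ha v hv]
        rw [← Module.End.mul_apply, ← map_mul, inv_mul_cancel, map_one, Module.End.one_apply] }
  have hle : commutator Q ≤ S := by
    rw [commutator_def, Subgroup.commutator_le]
    intro a _ b _ v hv
    have hinv : ∀ q, (c q * c q⁻¹) • v = v := fun q => by
      have h : τ q (τ q⁻¹ v) = v := by
        rw [← Module.End.mul_apply, ← map_mul, mul_inv_cancel, map_one, Module.End.one_apply]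
      rwa [hc q⁻¹ v hv, map_smul, hc q v hv, smul_smul, mul_comm] at h
    rw [commutatorElement_def, map_mul, map_mul, map_mul]
    simp only [Module.End.mul_apply, hc _ v hv, map_smul, smul_smul]
    rw [show c b⁻¹ * (c a⁻¹ * (c b * c a)) = (c a * c a⁻¹) * (c b * c b⁻¹) by ring, mul_smul,
      hinv, hinv]
  exact hle hq v hv

theorem finrank_range_avg_le [CharZero k] [FiniteDimensional k V] (ρ : A6 →* Module.End k V)
    (hV : Module.finrank k V ≤ 9) {g₀ : A6} (hg₀ : ρ g₀ ≠ 1) : Module.finrank k (LinearMap.range (avg k ρ)) ≤ 4 := by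
  by_contra hlt
  have hrn := LinearMap.finrank_range_add_finrank_ker (avg k ρ)
  have hb := eq_bot_of_finrank_le ρ _ le_rfl
    (fun g _ hv => apply_mem_ker_avg ρ g hv) (by omega)
  apply hg₀
  ext v
  have h1 : avg k ρ v = v := by
    have := LinearMap.congr_fun (avg_mul_avg (k := k) ρ) v
    exact LinearMap.ker_eq_bot.1 hb this
  have h2 := LinearMap.congr_fun (mul_avg (k := k) ρ g₀) v
  simpa [h1] using h2
end

/-! ### Restriction to the range of an orthogonal projection -/

/-- An orthogonal projection `P` of rank at most `N` factors as `Bᵀ B`: the rows of `B` are an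
orthonormal basis of the range of `P`, padded by zero rows. -/
theorem exists_transpose_mul_self {n N : ℕ} (P : Matrix (Fin n) (Fin n) ℝ) (hPt : P.transpose = P)
    (hPP : P * P = P)
    (hrank : Module.finrank ℝ (LinearMap.range (Matrix.toEuclideanLin P)) ≤ N) :
    ∃ B : Matrix (Fin N) (Fin n) ℝ, B.transpose * B = P := by
  set W := LinearMap.range (Matrix.toEuclideanLin P) with hW
  obtain ⟨m, rfl⟩ := Nat.exists_eq_add_of_le hrank
  let b := stdOrthonormalBasis ℝ W
  let B : Matrix (Fin (Module.finrank ℝ W + m)) (Fin n) ℝ :=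
    Matrix.of (Fin.append (fun i j => (b i : EuclideanSpace ℝ (Fin n)) j) 0)
  refine ⟨B, ?_⟩
  ext i j
  let ej : EuclideanSpace ℝ (Fin n) := EuclideanSpace.single j 1
  let y : W := ⟨Matrix.toEuclideanLin P ej, LinearMap.mem_range_self _ _⟩
  have hsymm : (Matrix.toEuclideanLin P).IsSymmetric := by
    rw [Matrix.isSymmetric_toEuclideanLin_iff]
    simpa [Matrix.IsHermitian, Matrix.conjTranspose_eq_transpose_of_trivial] using hPt
  have hfix : ∀ w : W, Matrix.toEuclideanLin P w = w := by
    rintro ⟨_, z, rfl⟩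
    ext l
    simp [Matrix.toLpLin_apply, Matrix.mulVec_mulVec, hPP]
  have h1 : ∀ l, inner ℝ (b l) y = (b l : EuclideanSpace ℝ (Fin n)) j := by
    intro l
    rw [Submodule.coe_inner, ← hsymm, hfix]
    simp [ej, EuclideanSpace.inner_single_right]
  have h2 := congrArg (fun z : W => (z : EuclideanSpace ℝ (Fin n)) i) (b.sum_repr' y)
  simp only [h1] at h2
  have h3 : (y : EuclideanSpace ℝ (Fin n)) i = P i j := by
    simp [y, ej, Matrix.toLpLin_apply]
  rw [h3] at h2
  rw [Matrix.mul_apply, Fin.sum_univ_add, ← h2]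
  simp [B, mul_comm]

/-- An orthogonal representation `R` commuting with an orthogonal projection `P` of rank at most `N`
restricts to the range of `P`. With `P = Bᵀ B`, this restriction, extended by the identity to `ℝᴺ`,
is `q ↦ B (R q) Bᵀ + (1 - B Bᵀ)`. -/
theorem exists_orthogonal_hom {Q : Type*} [Group Q] {n N : ℕ}
    (R : Q →* Matrix (Fin n) (Fin n) ℝ) (hR : ∀ q, (R q).transpose = R q⁻¹)
    (P : Matrix (Fin n) (Fin n) ℝ) (hPt : P.transpose = P) (hPP : P * P = P)
    (hcomm : ∀ q, Commute (R q) P)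
    (hrank : Module.finrank ℝ (LinearMap.range (Matrix.toEuclideanLin P)) ≤ N) :
    ∃ φ : Q →* Matrix.orthogonalGroup (Fin N) ℝ, ∀ q, φ q = 1 → R q * P = P := by
  obtain ⟨B, hB⟩ := exists_transpose_mul_self P hPt hPP hrank
  have hBP : B * P = B := by
    have h : (B * P - B).transpose * (B * P - B) = 0 := by
      have e1 : B.transpose * (B * P) = P := by rw [← Matrix.mul_assoc, hB, hPP]
      simp only [Matrix.transpose_sub, Matrix.transpose_mul, hPt, Matrix.sub_mul, Matrix.mul_sub,
        Matrix.mul_assoc, e1, hB, hPP, sub_self]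
    rw [← Matrix.conjTranspose_eq_transpose_of_trivial,
      Matrix.conjTranspose_mul_self_eq_zero] at h
    exact sub_eq_zero.1 h
  have hPB : P * B.transpose = B.transpose := by
    rw [← hPt, ← Matrix.transpose_mul, hBP]
  let F : Q → Matrix (Fin N) (Fin N) ℝ := fun q => B * R q * B.transpose + (1 - B * B.transpose)
  have hF1 : F 1 = 1 := by simp [F]
  have hFm : ∀ p q, F (p * q) = F p * F q := by
    intro p q
    have e1 : B * R p * B.transpose * (B * B.transpose) = B * R p * B.transpose := by
      rw [← Matrix.mul_assoc, Matrix.mul_assoc _ B.transpose B, hB, Matrix.mul_assoc _ P, hPB]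
    have e2 : B * B.transpose * (B * R q * B.transpose) = B * R q * B.transpose := by
      rw [← Matrix.mul_assoc, ← Matrix.mul_assoc, Matrix.mul_assoc B, hB, hBP]
    have e3 : B * B.transpose * (B * B.transpose) = B * B.transpose := by
      rw [← Matrix.mul_assoc, Matrix.mul_assoc B, hB, hBP]
    have e4 : B * R p * B.transpose * (B * R q * B.transpose) = B * R (p * q) * B.transpose := by
      calc B * R p * B.transpose * (B * R q * B.transpose)
          = B * R p * (B.transpose * B) * R q * B.transpose := by simp only [Matrix.mul_assoc]
        _ = B * (R p * P) * R q * B.transpose := by rw [hB]; simp only [Matrix.mul_assoc]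
        _ = B * P * (R p * R q) * B.transpose := by
          rw [(hcomm p).eq]; simp only [Matrix.mul_assoc]
        _ = B * R (p * q) * B.transpose := by rw [hBP, map_mul]
    simp only [F, add_mul, mul_add, sub_mul, mul_sub, one_mul, mul_one, e1, e2, e3, e4]
    abel
  have hFt : ∀ q, (F q).transpose = F q⁻¹ := by
    intro q
    simp [F, hR, Matrix.mul_assoc]
  refine ⟨{ toFun := fun q => ⟨F q, ?_⟩, map_one' := Subtype.ext hF1,
            map_mul' := fun p q => Subtype.ext (hFm p q) }, ?_⟩
  · rw [Matrix.mem_orthogonalGroup_iff, hFt, ← hFm, mul_inv_cancel, hF1]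
  · intro q hq
    have h : F q = 1 := congrArg Subtype.val hq
    have h1 : B * R q * B.transpose = B * B.transpose := by
      have := h
      simp only [F] at this
      rw [← sub_eq_zero] at this ⊢
      rw [← this]
      abel
    have h2 := congrArg (fun X => B.transpose * X * B) h1
    have e1 : B.transpose * (B * R q * B.transpose) * B = P * R q * P := by
      rw [← hB]; simp only [Matrix.mul_assoc]
    have e2 : B.transpose * (B * B.transpose) * B = P := by
      rw [← Matrix.mul_assoc, hB, Matrix.mul_assoc, hB, hPP]
    simp only [e1, e2] at h2
    rwa [← (hcomm q).eq, Matrix.mul_assoc, hPP] at h2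
end A6Rep

open A6Rep

/-- Let `Q` be a finite group in which every nontrivial normal subgroup meets the
commutator subgroup nontrivially, and which does not embed into `O(4)`. Then `Q × A_6`
does not embed into `O(9)`. -/
theorem prod_with_A6_not_subgroup_of_O9 (Q : Type) [Group Q] [Finite Q]
    (hQnormal : ∀ N : Subgroup Q, N.Normal → N ≠ ⊥ → N ⊓ commutator Q ≠ ⊥)
    (hQO4 : ¬ ∃ φ : Q →* Matrix.orthogonalGroup (Fin 4) ℝ, Function.Injective φ) :
    ¬ ∃ ψ : Q × alternatingGroup (Fin 6) →* Matrix.orthogonalGroup (Fin 9) ℝ,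
        Function.Injective ψ := by
  rintro ⟨ψ, hψ⟩
  apply hQO4
  let M : Q × A6 →* Matrix (Fin 9) (Fin 9) ℝ := (Submonoid.subtype _).comp ψ
  have hM : Function.Injective M := Subtype.val_injective.comp hψ
  have hMt : ∀ x, (M x).transpose = M x⁻¹ := by
    intro x
    have h1 : (M x).transpose * M x = 1 := by
      have := (Matrix.mem_orthogonalGroup_iff' _ _).1 (ψ x).2
      exact this
    have h2 : M x * M x⁻¹ = 1 := by rw [← map_mul, mul_inv_cancel, map_one]
    exact left_inv_eq_right_inv h1 h2
  let R : Q →* Matrix (Fin 9) (Fin 9) ℝ := M.comp (MonoidHom.inl Q A6)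
  let σ : A6 →* Matrix (Fin 9) (Fin 9) ℝ := M.comp (MonoidHom.inr Q A6)
  have hRσ : ∀ q g, Commute (R q) (σ g) := fun q g => (MonoidHom.commute_inl_inr q g).map M
  set P := avg ℝ σ with hP
  have hPP : P * P = P := avg_mul_avg σ
  have hPt : P.transpose = P := transpose_avg σ fun g => by simpa [σ] using hMt (1, g)
  have hcomm : ∀ q, Commute (R q) P := fun q => commute_avg σ (hRσ q)
  have hrank : Module.finrank ℝ (LinearMap.range (Matrix.toEuclideanLin P)) ≤ 4 := by
    let f : Matrix (Fin 9) (Fin 9) ℝ →+* Module.End ℝ (EuclideanSpace ℝ (Fin 9)) :=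
      (Matrix.toLpLinAlgEquiv 2).toRingEquiv.toRingHom
    have hf : Function.Injective f := (Matrix.toLpLinAlgEquiv 2).injective
    have h := map_avg ℝ f (RingHom.id ℝ) (fun a X => map_smul (Matrix.toLpLinAlgEquiv 2) a X) σ
    have : Nontrivial A6 := alternatingGroup.nontrivial_of_three_le_card (by simp)
    obtain ⟨g₀, hg₀⟩ := exists_ne (1 : A6)
    change Module.finrank ℝ (LinearMap.range (f P)) ≤ 4
    rw [hP, h]
    refine finrank_range_avg_le _ (by simp) (g₀ := g₀) fun hg => hg₀ ?_
    have h1 : σ g₀ = 1 := hf (by rw [map_one]; exact hg)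
    have h2 : ((1 : Q), g₀) = 1 := hM (by rw [map_one]; exact h1)
    exact congrArg Prod.snd h2
  obtain ⟨φ, hφ⟩ := exists_orthogonal_hom R (fun q => by
    simpa [R] using hMt (q, 1)) P hPt hPP hcomm hrank
  refine ⟨φ, ?_⟩
  rw [← MonoidHom.ker_eq_bot_iff]
  by_contra hker
  refine hQnormal φ.ker inferInstance hker ?_
  rw [eq_bot_iff]
  rintro q ⟨hq1, hq2⟩
  have hqP : R q * P = P := hφ q hq1
  -- `c` is the complexification; `R q` is the identity once it fixes the range (by `hqP`) and the
  -- kernel (as `q` is in the commutator subgroup) of the complexified projection.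
  let c : Matrix (Fin 9) (Fin 9) ℝ →+* Module.End ℂ (Fin 9 → ℂ) :=
    (Matrix.toLinAlgEquiv' : Matrix (Fin 9) (Fin 9) ℂ ≃ₐ[ℂ] _).toRingHom.comp
      Complex.ofRealHom.mapMatrix
  have hc : Function.Injective c :=
    Matrix.toLinAlgEquiv'.injective.comp (Matrix.map_injective Complex.ofReal_injective)
  let σC : A6 →* Module.End ℂ (Fin 9 → ℂ) := (c : _ →* _).comp σ
  have hcP : c P = avg ℂ σC := by
    refine map_avg ℂ c Complex.ofRealHom (fun a X => ?_) σ
    have h : (a • X).map Complex.ofRealHom = (a : ℂ) • X.map Complex.ofRealHom := by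
      ext i j; simp
    change Matrix.toLinAlgEquiv' ((a • X).map Complex.ofRealHom) =
      (a : ℂ) • Matrix.toLinAlgEquiv' (X.map Complex.ofRealHom)
    rw [h, map_smul]
  have hfix : ∀ v ∈ LinearMap.ker (avg ℂ σC), c (R q) v = v :=
    fun v hv => commutator_apply_ker_avg σC (by simp) ((c : _ →* _).comp R)
      (fun q g => (hRσ q g).map c) hq2 hv
  have h1 : c (R q) = 1 := by
    apply LinearMap.ext
    intro v
    have e1 : c (R q) (avg ℂ σC v) = avg ℂ σC v := by
      rw [← hcP, ← Module.End.mul_apply, ← map_mul, hqP]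
    have e2 := hfix (v - avg ℂ σC v) (by
      rw [LinearMap.mem_ker, map_sub, ← Module.End.mul_apply, avg_mul_avg, sub_self])
    rw [map_sub, e1] at e2
    simpa using e2
  have h2 : R q = 1 := hc (by rw [h1, map_one])
  have h3 : (q, (1 : A6)) = 1 := hM (by rw [map_one]; exact h2)
  exact congrArg Prod.fst h3
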